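/- arXiv:2110.12699 — 2 statements merged into one kernel-verified Lean document; each statement's English description precedes it below -/
import Mathlib

section
/- The formula φ_synch expresses synchronicity: let o ∈ AP and φ_synch := G((o ∧ X¬o) ⩔ (¬o ∧ Xo)). For every team T = (t_i)_{i∈ι} and every initial tef τ for ι: (T,τ) ⊨ φ_synch if and only if τ(n)(i) = n for all n ∈ ℕ and i ∈ ι (i.e., τ is the synchronous initial tef) and for all i, j ∈ ι and n ∈ ℕ: (o ∈ t_i(n) ↔ o ∈ t_j(n)) and (o ∈ t_i(n) ↔ o ∉ t_i(n+1)). -/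
namespace TTS

abbrev Trace (AP : Type) := ℕ → Set AP

def IsStutTef {ι : Type} (τ : ℕ → ι → ℕ) : Prop :=
  ∀ n i, τ n i ≤ τ (n + 1) i

def IsTef {ι : Type} (τ : ℕ → ι → ℕ) : Prop :=
  IsStutTef τ ∧ (∀ n, τ n ≠ τ (n + 1)) ∧ (∀ n i, τ (n + 1) i ≤ τ n i + 1)

def Initial {ι : Type} (τ : ℕ → ι → ℕ) : Prop := ∀ i, τ 0 i = 0

def Fair {ι : Type} (τ : ℕ → ι → ℕ) : Prop :=
  ∀ (m : ℕ) (i : ι), ∃ n, m ≤ τ n i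

def Synchronous {ι : Type} (τ : ℕ → ι → ℕ) : Prop :=
  ∀ n (i j : ι), τ n i = τ n j

def shift {ι : Type} (τ : ℕ → ι → ℕ) (k : ℕ) : ℕ → ι → ℕ := fun n => τ (n + k)

/-- TeamLTL formulas extended with Boolean disjunction ⩔, the non-emptiness
atom NE, and the universal subteam quantifier A¹. -/
inductive EFormula (AP : Type) : Type
  | atom : AP → EFormula AP
  | natom : AP → EFormula AP
  | and : EFormula AP → EFormula AP → EFormula AP
  | or : EFormula AP → EFormula AP → EFormula AP
  | bor : EFormula AP → EFormula AP → EFormula AP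
  | NE : EFormula AP
  | A1 : EFormula AP → EFormula AP
  | X : EFormula AP → EFormula AP
  | U : EFormula AP → EFormula AP → EFormula AP
  | W : EFormula AP → EFormula AP → EFormula AP

def esat {AP : Type} : {ι : Type} → (ι → Trace AP) → (ℕ → ι → ℕ) → EFormula AP → Prop
  | _, T, τ, .atom p => ∀ i, p ∈ T i (τ 0 i)
  | _, T, τ, .natom p => ∀ i, p ∉ T i (τ 0 i)
  | _, T, τ, .and φ ψ => esat T τ φ ∧ esat T τ ψ
  | ι, T, τ, .or φ ψ =>
      ∃ P : ι → Prop,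
        esat (fun i : {i // P i} => T i.1) (fun n i => τ n i.1) φ ∧
        esat (fun i : {i // ¬ P i} => T i.1) (fun n i => τ n i.1) ψ
  | _, T, τ, .bor φ ψ => esat T τ φ ∨ esat T τ ψ
  | ι, _, _, .NE => Nonempty ι
  | ι, T, τ, .A1 φ =>
      ∀ i : ι, esat (fun j : {j // j = i} => T j.1) (fun n j => τ n j.1) φ
  | _, T, τ, .X φ => esat T (shift τ 1) φ
  | _, T, τ, .U φ ψ =>
      ∃ k, esat T (shift τ k) ψ ∧ ∀ m, m < k → esat T (shift τ m) φ
  | _, T, τ, .W φ ψ =>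
      ∀ k, esat T (shift τ k) φ ∨ ∃ m, m ≤ k ∧ esat T (shift τ m) ψ

def esatE {AP ι : Type} (T : ι → Trace AP) (φ : EFormula AP) : Prop :=
  ∃ τ : ℕ → ι → ℕ, IsTef τ ∧ Initial τ ∧ esat T τ φ

def esatA {AP ι : Type} (T : ι → Trace AP) (φ : EFormula AP) : Prop :=
  ∀ τ : ℕ → ι → ℕ, IsTef τ → Initial τ → esat T τ φ

def esatS {AP ι : Type} (T : ι → Trace AP) (φ : EFormula AP) : Prop :=
  esat T (fun n _ => n) φ

/-- Plain TeamLTL formulas (negation normal form, no extended connectives). -/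
inductive Formula (AP : Type) : Type
  | atom : AP → Formula AP
  | natom : AP → Formula AP
  | and : Formula AP → Formula AP → Formula AP
  | or : Formula AP → Formula AP → Formula AP
  | X : Formula AP → Formula AP
  | U : Formula AP → Formula AP → Formula AP
  | W : Formula AP → Formula AP → Formula AP

/-- Embedding of plain TeamLTL formulas into the extended syntax. -/
def Formula.toE {AP : Type} : Formula AP → EFormula AP
  | .atom p => .atom p
  | .natom p => .natom p
  | .and φ ψ => .and φ.toE ψ.toE
  | .or φ ψ => .or φ.toE ψ.toE
  | .X φ => .X φ.toE
  | .U φ ψ => .U φ.toE ψ.toE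
  | .W φ ψ => .W φ.toE ψ.toE

def sat {AP ι : Type} (T : ι → Trace AP) (τ : ℕ → ι → ℕ) (φ : Formula AP) : Prop :=
  esat T τ φ.toE

def satE {AP ι : Type} (T : ι → Trace AP) (φ : Formula AP) : Prop :=
  ∃ τ : ℕ → ι → ℕ, IsTef τ ∧ Initial τ ∧ sat T τ φ

def satA {AP ι : Type} (T : ι → Trace AP) (φ : Formula AP) : Prop :=
  ∀ τ : ℕ → ι → ℕ, IsTef τ → Initial τ → sat T τ φ

def satS {AP ι : Type} (T : ι → Trace AP) (φ : Formula AP) : Prop :=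
  sat T (fun n _ => n) φ

/-- The team T_o over AP ∪ {o}: the fresh proposition o (here: none) is added
at exactly the even positions of every trace. -/
def addO {AP ι : Type} (T : ι → Trace AP) : ι → Trace (Option AP) :=
  fun i n => {x | (∃ p, x = some p ∧ p ∈ T i n) ∨ (x = none ∧ Even n)}

/-- Mapping a plain formula along a renaming of atomic propositions. -/
def Formula.map {AP AP' : Type} (f : AP → AP') : Formula AP → Formula AP'
  | .atom p => .atom (f p)
  | .natom p => .natom (f p)
  | .and φ ψ => .and (φ.map f) (ψ.map f)
  | .or φ ψ => .or (φ.map f) (ψ.map f)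
  | .X φ => .X (φ.map f)
  | .U φ ψ => .U (φ.map f) (ψ.map f)
  | .W φ ψ => .W (φ.map f) (ψ.map f)
/-- φ_synch := G((o ∧ X¬o) ⩔ (¬o ∧ Xo)), where Gφ := φ W ⊥ and ⊥ := o ∧ ¬o. -/
def phiSynch {AP : Type} (o : AP) : EFormula AP :=
  .W (.bor (.and (.atom o) (.X (.natom o)))
           (.and (.natom o) (.X (.atom o))))
     (.and (.atom o) (.natom o))

/-- φ_synch expresses synchronicity: it holds exactly for the synchronous
initial tef on teams that alternate on o. -/
theorem phiSynch_expresses_synchronicity (AP ι : Type) (o : AP)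
    (T : ι → Trace AP) (τ : ℕ → ι → ℕ) (hτ : IsTef τ) (hinit : Initial τ) :
    esat T τ (phiSynch o) ↔
      ((∀ n (i : ι), τ n i = n) ∧
        ∀ (i j : ι) (n : ℕ),
          (o ∈ T i n ↔ o ∈ T j n) ∧ (o ∈ T i n ↔ o ∉ T i (n + 1))) := by
  obtain ⟨hmono, _, hstep⟩ := hτ
  simp only [phiSynch, esat, shift, Nat.zero_add]
  constructor
  · intro h
    have key : ∀ k, (∀ i, (o ∈ T i (τ k i)) ∧ o ∉ T i (τ (k + 1) i)) ∨
        (∀ i, (o ∉ T i (τ k i)) ∧ o ∈ T i (τ (k + 1) i)) := by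
      intro k
      rcases h k with (⟨h1, h2⟩ | ⟨h1, h2⟩) | ⟨m, _, h1, h2⟩
      · left
        intro i
        refine ⟨h1 i, ?_⟩
        have := h2 i
        rwa [Nat.add_comm 1 k] at this
      · right
        intro i
        refine ⟨h1 i, ?_⟩
        have := h2 i
        rwa [Nat.add_comm 1 k] at this
      · left
        intro i
        exact absurd (h1 i) (h2 i)
    have hsync : ∀ n (i : ι), τ n i = n := by
      intro n i
      induction n with
      | zero => exact hinit i
      | succ n ih =>
        have h1 := hmono n i
        have h2 := hstep n i
        have h3 : τ (n + 1) i ≠ τ n i := by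
          intro he
          rcases key n with hk | hk
          · have := hk i
            rw [he] at this
            exact this.2 this.1
          · have := hk i
            rw [he] at this
            exact this.1 this.2
        omega
    refine ⟨hsync, ?_⟩
    intro i j n
    simp only [hsync] at key
    rcases key n with hk | hk
    · have hi := hk i
      have hj := hk j
      tauto
    · have hi := hk i
      have hj := hk j
      tauto
  · rintro ⟨hsync, halt⟩ k
    left
    simp only [hsync, Nat.add_comm 1 k]
    by_cases hex : ∃ i, o ∈ T i k
    · obtain ⟨i, hi⟩ := hex
      left
      have hall : ∀ j, o ∈ T j k := fun j => (halt i j k).1.1 hi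
      exact ⟨hall, fun j => (halt j j k).2.1 (hall j)⟩
    · right
      have hall : ∀ j, o ∉ T j k := fun j hj => hex ⟨j, hj⟩
      exact ⟨hall, fun j => by
        by_contra hc
        exact hall j ((halt j j k).2.2 hc)⟩

end TTS
end

section
/- The formula φ_fair expresses fairness: let o ∈ AP and φ_fair := A¹ G((o ∧ F¬o) ∨ (¬o ∧ Fo)). Let T = (t_i)_{i∈ι} be a team such that o ∈ t_i(n) iff n is even, for all i ∈ ι and n ∈ ℕ, and let τ be a tef for ι. Then (T,τ) ⊨ φ_fair if and only if τ is fair. -/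
namespace TTS

/-- ⊤ := o ∨ ¬o, ⊥ := o ∧ ¬o, Fφ := ⊤ U φ, Gφ := φ W ⊥ for the fixed o. -/
def F' {AP : Type} (o : AP) (φ : EFormula AP) : EFormula AP :=
  .U (.or (.atom o) (.natom o)) φ

def G' {AP : Type} (o : AP) (φ : EFormula AP) : EFormula AP :=
  .W φ (.and (.atom o) (.natom o))

/-- φ_fair := A¹ G((o ∧ F¬o) ∨ (¬o ∧ Fo)). -/
def phiFair {AP : Type} (o : AP) : EFormula AP :=
  .A1 (G' o (.or (.and (.atom o) (F' o (.natom o)))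
                 (.and (.natom o) (F' o (.atom o)))))

theorem top_sat {AP ι : Type} (o : AP) (T : ι → Trace AP) (τ : ℕ → ι → ℕ) :
    esat T τ (.or (.atom o) (.natom o)) := by
  simp only [esat]
  exact ⟨fun i => o ∈ T i (τ 0 i), fun i => i.2, fun i => i.2⟩

theorem hits (f : ℕ → ℕ) (hs : ∀ n, f (n + 1) ≤ f n + 1) (k : ℕ)
    (n : ℕ) (h : f k + 1 ≤ f (n + k)) : ∃ m, f (m + k) = f k + 1 := by
  induction n with
  | zero => simp at h
  | succ n ih =>
    by_cases h' : f k + 1 ≤ f (n + k)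
    · exact ih h'
    · refine ⟨n + 1, ?_⟩
      have := hs (n + k)
      have e : n + 1 + k = n + k + 1 := by omega
      rw [e] at h ⊢
      omega

/-- φ_fair expresses fairness on teams alternating on o. -/
theorem phiFair_expresses_fairness (AP ι : Type) (o : AP)
    (T : ι → Trace AP)
    (halt : ∀ (i : ι) (n : ℕ), o ∈ T i n ↔ Even n)
    (τ : ℕ → ι → ℕ) (hτ : IsTef τ) :
    esat T τ (phiFair o) ↔ Fair τ := by
  obtain ⟨hm, -, hs⟩ := hτ
  have mono : ∀ i, Monotone (fun n => τ n i) := fun i => monotone_nat_of_le_succ (fun n => hm n i)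
  constructor
  · intro h m i
    induction m with
    | zero => exact ⟨0, Nat.zero_le _⟩
    | succ m ih =>
      obtain ⟨n, hn⟩ := ih
      simp only [phiFair, G', F', esat, shift, halt, zero_add] at h
      rcases h i n with ⟨P, ⟨h1, k, h2, -⟩, ⟨h3, k', h4, -⟩⟩ | ⟨m', -, h1, h2⟩
      · by_cases hP : P ⟨i, rfl⟩
        · have a := h1 ⟨⟨i, rfl⟩, hP⟩
          have b := h2 ⟨⟨i, rfl⟩, hP⟩
          have c : τ n i ≤ τ (k + n) i := mono i (by omega)
          refine ⟨k + n, ?_⟩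
          have d : τ n i ≠ τ (k + n) i := fun e => b (e ▸ a)
          omega
        · have a := h3 ⟨⟨i, rfl⟩, hP⟩
          have b := h4 ⟨⟨i, rfl⟩, hP⟩
          have c : τ n i ≤ τ (k' + n) i := mono i (by omega)
          refine ⟨k' + n, ?_⟩
          have d : τ n i ≠ τ (k' + n) i := fun e => a (e ▸ b)
          omega
      · exact absurd (h1 ⟨i, rfl⟩) (h2 ⟨i, rfl⟩)
  · intro h i k
    left
    obtain ⟨n, hn⟩ := h (τ k i + 1) i
    obtain ⟨m, hm'⟩ := hits (fun n => τ n i) (fun n => hs n i) k n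
      (hn.trans (mono i (by omega : n ≤ n + k)))
    by_cases hE : Even (τ k i)
    · refine ⟨fun _ => True, ⟨?_, m, ?_, fun _ _ => top_sat _ _ _⟩,
        ⟨?_, 0, ?_, fun _ _ => top_sat _ _ _⟩⟩
      · simp only [esat, shift, halt, zero_add]
        rintro ⟨⟨j, rfl⟩, -⟩
        exact hE
      · simp only [esat, shift, halt, zero_add]
        rintro ⟨⟨j, rfl⟩, -⟩
        simp only [hm']
        grind
      · rintro ⟨j, hj⟩
        exact absurd trivial hj
      · rintro ⟨j, hj⟩
        exact absurd trivial hj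
    · refine ⟨fun _ => False, ⟨?_, 0, ?_, fun _ _ => top_sat _ _ _⟩,
        ⟨?_, m, ?_, fun _ _ => top_sat _ _ _⟩⟩
      · rintro ⟨j, hj⟩
        exact hj.elim
      · rintro ⟨j, hj⟩
        exact hj.elim
      · simp only [esat, shift, halt, zero_add]
        rintro ⟨⟨j, rfl⟩, -⟩
        exact hE
      · simp only [esat, shift, halt, zero_add]
        rintro ⟨⟨j, rfl⟩, -⟩
        simp only [hm']
        grind

end TTS
end
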